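/- Let σ ≤ 32π² and m ∈ ℕ₀. There exists a constant C > 0 such that for all large α > 0, T_{α,m} ≥ C/α⁴, where T_{α,m} = sup{ ∫_B |x|^α ( e^{σu²} − Σ_{k=0}^m σ^k u^{2k}/k! ) dx : u ∈ H²_N(B), ‖Δu‖₂ = 1 }. -/

import Mathlib

open MeasureTheory

noncomputable abbrev E4 := EuclideanSpace ℝ (Fin 4)

/-- The Laplacian on `ℝ⁴`, as the trace of the second derivative. -/
noncomputable def lap4 (u : E4 → ℝ) (x : E4) : ℝ :=
  ∑ i : Fin 4, iteratedFDeriv ℝ 2 u x ![EuclideanSpace.single i 1, EuclideanSpace.single i 1]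

/-- The truncated weighted exponential functional on the unit ball `B ⊂ ℝ⁴`. -/
noncomputable def Fm (α σ : ℝ) (m : ℕ) (u : E4 → ℝ) : ℝ :=
  ∫ x in Metric.ball (0:E4) 1, ‖x‖ ^ α *
    (Real.exp (σ * (u x) ^ 2) -
      ∑ k ∈ Finset.range (m + 1), σ ^ k * (u x) ^ (2 * k) / (Nat.factorial k))

/-!
The constraint `∫ |Δu| ^ (n / 2) = 1` in dimension `n` (`‖Δu‖₂ = 1` for `n = 4`) is invariant under
the rescaling `u ↦ u (α (· - a))`, whereas `∫ G(u)` gets multiplied by `α⁻ⁿ`. Taking `|a| = 1 - 1/α`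
puts the support of the rescaled function inside the unit ball but at distance at most `2/α` from
its boundary, where the weight `|x| ^ α` is at least `(1 - 2/α) ^ α`. Since this tends to `e⁻²`,
the weight costs no more than a constant factor.
-/

open Filter Function Metric Topology
open Module (finrank finrank_pos)
open scoped ContDiff Laplacian

lemma lap4_eq_laplacian (u : E4 → ℝ) : lap4 u = Δ u := by
  simp [InnerProductSpace.laplacian_eq_iteratedFDeriv_orthonormalBasis u
    (EuclideanSpace.basisFun (Fin 4) ℝ), funext_iff, lap4]

lemma hasCompactSupport_of_tsupport_subset_ball {X F : Type*} [PseudoMetricSpace X] [ProperSpace X]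
    [Zero F] {u : X → F} {a : X} {r : ℝ} (hu : tsupport u ⊆ ball a r) : HasCompactSupport u :=
  (isCompact_closedBall a r).of_isClosed_subset (isClosed_tsupport u)
    (hu.trans ball_subset_closedBall)

section Rescale

variable {E : Type*} [NormedAddCommGroup E] [NormedSpace ℝ E] {F : Type*}

/-- The translated and rescaled function `x ↦ u (α (x - a))`; the test function `u_α` of the
paper is `rescale α x_α u`. -/
def rescale (α : ℝ) (a : E) (u : E → F) (x : E) : F := u (α • (x - a))

lemma contDiff_rescale [NormedAddCommGroup F] [NormedSpace ℝ F] {n : ℕ∞ω} {u : E → F}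
    (hu : ContDiff ℝ n u) (α : ℝ) (a : E) : ContDiff ℝ n (rescale α a u) :=
  hu.comp (by fun_prop)

lemma tsupport_rescale_subset_ball [Zero F] {u : E → F} {r : ℝ} (hu : tsupport u ⊆ ball 0 r)
    {α : ℝ} (hα : 0 < α) (a : E) : tsupport (rescale α a u) ⊆ ball a (r / α) := by
  intro x hx
  have hx' : α • (x - a) ∈ ball 0 r :=
    hu (tsupport_comp_subset_preimage u (f := fun x ↦ α • (x - a)) (by fun_prop) hx)
  rwa [mem_ball_zero_iff, norm_smul, Real.norm_of_nonneg hα.le, mul_comm, ← lt_div_iff₀ hα,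
    ← mem_ball_iff_norm] at hx'

lemma integral_rescale [FiniteDimensional ℝ E] [MeasurableSpace E] [BorelSpace E]
    (μ : Measure E) [μ.IsAddHaarMeasure] [NormedAddCommGroup F] [NormedSpace ℝ F]
    (α : ℝ) (a : E) (f : E → F) :
    ∫ x, rescale α a f x ∂μ = |(α ^ finrank ℝ E)⁻¹| • ∫ x, f x ∂μ :=
  (integral_sub_right_eq_self (fun x ↦ f (α • x)) a).trans (Measure.integral_comp_smul μ f α)

end Rescale

section Laplacian

variable {E : Type*} [NormedAddCommGroup E] [InnerProductSpace ℝ E] [FiniteDimensional ℝ E]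
  {F : Type*} [NormedAddCommGroup F] [NormedSpace ℝ F] {u : E → F}

lemma continuous_laplacian (hu : ContDiff ℝ 2 u) : Continuous (Δ u) := by
  have := hu.continuous_iteratedFDeriv (m := 2) le_rfl
  rw [InnerProductSpace.laplacian_eq_iteratedFDeriv_stdOrthonormalBasis]
  fun_prop

lemma support_laplacian_subset (u : E → F) : support (Δ u) ⊆ tsupport u := by
  refine support_subset_iff'.2 fun x hx ↦ ?_
  have hDu : iteratedFDeriv ℝ 2 u x = 0 :=
    notMem_support.1 fun h ↦ hx (support_iteratedFDeriv_subset 2 h)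
  simp [InnerProductSpace.laplacian_eq_iteratedFDeriv_stdOrthonormalBasis, hDu]

lemma laplacian_norm_sq (x : E) : Δ (fun y : E ↦ ‖y‖ ^ 2) x = 2 * finrank ℝ E := by
  let L : E →L[ℝ] E →L[ℝ] ℝ := innerSL ℝ
  have hL (y z : E) : L y z = inner ℝ y z := rfl
  have hD : fderiv ℝ (fun y : E ↦ ‖y‖ ^ 2) = ⇑((2 : ℝ) • L) := by
    ext y z
    simp [(hasStrictFDerivAt_norm_sq y).hasFDerivAt.fderiv, hL]
  simp only [InnerProductSpace.laplacian_eq_iteratedFDeriv_stdOrthonormalBasis,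
    iteratedFDeriv_two_apply, hD, ContinuousLinearMap.fderiv]
  simp [hL, mul_comm]

lemma laplacian_rescale (hu : ContDiff ℝ 2 u) (α : ℝ) (a : E) :
    Δ (rescale α a u) = α ^ 2 • rescale α a (Δ u) := by
  ext x
  have hD : iteratedFDeriv ℝ 2 (rescale α a u) x =
      α ^ 2 • iteratedFDeriv ℝ 2 u (α • (x - a)) :=
    (iteratedFDeriv_comp_sub (f := fun y ↦ u (α • y)) 2 a x).trans
      (congrFun (iteratedFDeriv_comp_const_smul α hu) (x - a))
  simp [InnerProductSpace.laplacian_eq_iteratedFDeriv_stdOrthonormalBasis, hD, rescale,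
    Finset.smul_sum]

lemma setIntegral_abs_laplacian_rpow_eq_integral [MeasurableSpace E] (μ : Measure E) {u : E → ℝ}
    {s : Set E} (hs : tsupport u ⊆ s) {p : ℝ} (hp : p ≠ 0) :
    ∫ x in s, |Δ u x| ^ p ∂μ = ∫ x, |Δ u x| ^ p ∂μ :=
  setIntegral_eq_integral_of_forall_compl_eq_zero fun x hx ↦ by
    rw [notMem_support.1 fun h ↦ hx (hs (support_laplacian_subset u h)), abs_zero,
      Real.zero_rpow hp]

lemma integral_abs_laplacian_rescale_rpow [MeasurableSpace E] [BorelSpace E] (μ : Measure E)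
    [μ.IsAddHaarMeasure] {u : E → ℝ} (hu : ContDiff ℝ 2 u) {α : ℝ} (hα : 0 < α) (a : E) :
    ∫ x, |Δ (rescale α a u) x| ^ (finrank ℝ E / 2 : ℝ) ∂μ =
      ∫ x, |Δ u x| ^ (finrank ℝ E / 2 : ℝ) ∂μ := by
  have hscale : (α ^ 2) ^ (finrank ℝ E / 2 : ℝ) = α ^ finrank ℝ E := by
    rw [← Real.rpow_natCast_mul hα.le, Nat.cast_ofNat, mul_div_cancel₀ _ two_ne_zero,
      Real.rpow_natCast]
  calc ∫ x, |Δ (rescale α a u) x| ^ (finrank ℝ E / 2 : ℝ) ∂μ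
      = ∫ x, α ^ finrank ℝ E *
          rescale α a (fun y ↦ |Δ u y| ^ (finrank ℝ E / 2 : ℝ)) x ∂μ := by
        simp only [laplacian_rescale hu, Pi.smul_apply, smul_eq_mul, abs_mul,
          abs_of_pos (pow_pos hα 2), Real.mul_rpow (pow_pos hα 2).le (abs_nonneg _), hscale,
          rescale]
    _ = ∫ x, |Δ u x| ^ (finrank ℝ E / 2 : ℝ) ∂μ := by
        rw [integral_const_mul, integral_rescale, abs_of_pos (by positivity), smul_eq_mul,
          mul_inv_cancel_left₀ (pow_pos hα _).ne']

end Laplacian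

section TestFunction

variable {E : Type*} [NormedAddCommGroup E] [InnerProductSpace ℝ E] [FiniteDimensional ℝ E]

lemma exists_contDiff_tsupport_subset_laplacian_ne_zero [Nontrivial E] {r : ℝ} (hr : 0 < r) :
    ∃ u : E → ℝ, ContDiff ℝ ∞ u ∧ tsupport u ⊆ ball 0 r ∧ Δ u 0 ≠ 0 := by
  let φ : ContDiffBump (0 : E) := ⟨r / 4, r / 2, by positivity, by linarith⟩
  refine ⟨fun x ↦ φ x * ‖x‖ ^ 2, φ.contDiff.mul (contDiff_norm_sq ℝ), ?_, ?_⟩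
  · calc tsupport (fun x ↦ φ x * ‖x‖ ^ 2) ⊆ tsupport φ := tsupport_mul_subset_left
      _ = closedBall 0 (r / 2) := φ.tsupport_eq
      _ ⊆ ball 0 r := closedBall_subset_ball (by linarith)
  · have hφ : (fun x ↦ φ x * ‖x‖ ^ 2) =ᶠ[𝓝 0] fun x ↦ ‖x‖ ^ 2 := by
      filter_upwards [φ.eventuallyEq_one] with x hx
      simp [hx]
    rw [(InnerProductSpace.laplacian_congr_nhds hφ).eq_of_nhds, laplacian_norm_sq]
    exact mul_ne_zero two_ne_zero (Nat.cast_ne_zero.2 finrank_pos.ne')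

variable [MeasurableSpace E] [OpensMeasurableSpace E] (μ : Measure E)
  [IsFiniteMeasureOnCompacts μ] [μ.IsOpenPosMeasure]

lemma integral_abs_laplacian_rpow_pos {u : E → ℝ} (hu : ContDiff ℝ 2 u)
    (hsupp : HasCompactSupport u) {x : E} (hx : Δ u x ≠ 0) {p : ℝ} (hp : 0 < p) :
    0 < ∫ x, |Δ u x| ^ p ∂μ := by
  refine Continuous.integral_pos_of_hasCompactSupport_nonneg_nonzero (x := x)
    ((continuous_laplacian hu).abs.rpow_const fun _ ↦ .inr hp.le) ?_ (fun _ ↦ by positivity)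
    (by positivity)
  refine (hsupp.mono' (support_laplacian_subset u)).comp_left (g := fun t : ℝ ↦ |t| ^ p) ?_
  simp [hp.ne']

lemma exists_contDiff_integral_abs_laplacian_rpow_eq_one [Nontrivial E] {r : ℝ} (hr : 0 < r)
    {p : ℝ} (hp : 0 < p) :
    ∃ u : E → ℝ, ContDiff ℝ ∞ u ∧ tsupport u ⊆ ball 0 r ∧ ∫ x, |Δ u x| ^ p ∂μ = 1 := by
  obtain ⟨u, hu, hsupp, hΔ⟩ := exists_contDiff_tsupport_subset_laplacian_ne_zero (E := E) hr
  have hu₂ : ContDiff ℝ 2 u := hu.of_le (WithTop.coe_le_coe.2 le_top)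
  set I := ∫ x, |Δ u x| ^ p ∂μ with hI_def
  have hI : 0 < I := integral_abs_laplacian_rpow_pos μ hu₂
    (hasCompactSupport_of_tsupport_subset_ball hsupp) hΔ hp
  refine ⟨I ^ (-p⁻¹) • u, contDiff_const.smul hu, ?_, ?_⟩
  · exact (tsupport_smul_subset_right (fun _ ↦ I ^ (-p⁻¹)) u).trans hsupp
  · have hc : 0 < I ^ (-p⁻¹) := Real.rpow_pos_of_pos hI _
    have hscale : (I ^ (-p⁻¹)) ^ p = I⁻¹ := by
      rw [← Real.rpow_mul hI.le, neg_mul, inv_mul_cancel₀ hp.ne', Real.rpow_neg_one]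
    simp only [InnerProductSpace.laplacian_smul _ hu₂.contDiffAt, smul_eq_mul, abs_mul,
      abs_of_pos hc, Real.mul_rpow hc.le (abs_nonneg _), hscale]
    rw [integral_const_mul, ← hI_def, inv_mul_cancel₀ hI.ne']

end TestFunction

section Weight

lemma eventually_exp_neg_three_le_one_sub_two_div_rpow :
    ∀ᶠ α : ℝ in atTop, Real.exp (-3) ≤ (1 - 2 / α) ^ α := by
  have hlim := Real.tendsto_one_add_div_rpow_exp (-2)
  simp only [neg_div, ← sub_eq_add_neg] at hlim
  exact hlim.eventually_const_le (Real.exp_lt_exp.2 (by norm_num))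

lemma const_mul_integral_le_integral_mul {X : Type*} [MeasurableSpace X] {μ : Measure X}
    {w f : X → ℝ} {c : ℝ} (hf : Integrable f μ) (hwf : Integrable (fun x ↦ w x * f x) μ)
    (hf₀ : 0 ≤ f) (hw : ∀ x ∈ support f, c ≤ w x) :
    c * ∫ x, f x ∂μ ≤ ∫ x, w x * f x ∂μ := by
  rw [← integral_const_mul]
  refine integral_mono (hf.const_mul c) hwf fun x ↦ ?_
  by_cases hx : f x = 0
  · simp [hx]
  · exact mul_le_mul_of_nonneg_right (hw x hx) (hf₀ x)

variable {E : Type*} [NormedAddCommGroup E] [NormedSpace ℝ E]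

lemma tsupport_rescale_subset_unitBall {F : Type*} [Zero F] {u : E → F}
    (hu : tsupport u ⊆ ball 0 1) {α : ℝ} (hα : 0 < α) {a : E} (ha : ‖a‖ = 1 - 1 / α) :
    tsupport (rescale α a u) ⊆ ball 0 1 :=
  (tsupport_rescale_subset_ball hu hα a).trans <|
    ball_subset_ball' (by rw [dist_zero_right, ha, add_sub_cancel])

lemma mul_integral_le_setIntegral_norm_rpow_mul_rescale [FiniteDimensional ℝ E]
    [MeasurableSpace E] [BorelSpace E] (μ : Measure E) [μ.IsAddHaarMeasure] {f : E → ℝ}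
    (hf : Continuous f) (hf₀ : 0 ≤ f) (hsupp : tsupport f ⊆ ball 0 1)
    {α : ℝ} (hα : 2 ≤ α) {a : E} (ha : ‖a‖ = 1 - 1 / α) :
    (1 - 2 / α) ^ α * ((∫ x, f x ∂μ) / α ^ finrank ℝ E) ≤
      ∫ x in ball 0 1, ‖x‖ ^ α * rescale α a f x ∂μ := by
  have hα₀ : 0 < α := by linarith
  have hsupp' := tsupport_rescale_subset_unitBall hsupp hα₀ ha
  have hcont : Continuous (rescale α a f) := hf.comp (by fun_prop)
  have hcompact : HasCompactSupport (rescale α a f) :=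
    hasCompactSupport_of_tsupport_subset_ball hsupp'
  have hweight : ∀ x ∈ support (rescale α a f), (1 - 2 / α) ^ α ≤ ‖x‖ ^ α := fun x hx ↦ by
    have hxa := tsupport_rescale_subset_ball hsupp hα₀ a (subset_tsupport _ hx)
    rw [mem_ball_iff_norm'] at hxa
    have hax := norm_sub_norm_le a x
    have htwo : 2 / α = 1 / α + 1 / α := by ring
    exact Real.rpow_le_rpow (sub_nonneg.2 ((div_le_one hα₀).2 hα)) (by linarith) hα₀.le
  calc (1 - 2 / α) ^ α * ((∫ x, f x ∂μ) / α ^ finrank ℝ E)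
      = (1 - 2 / α) ^ α * ∫ x, rescale α a f x ∂μ := by
        rw [integral_rescale, abs_of_pos (by positivity), smul_eq_mul, inv_mul_eq_div]
    _ ≤ ∫ x, ‖x‖ ^ α * rescale α a f x ∂μ :=
        const_mul_integral_le_integral_mul (hcont.integrable_of_hasCompactSupport hcompact)
          (((continuous_norm.rpow_const fun _ ↦ .inr hα₀.le).mul
            hcont).integrable_of_hasCompactSupport hcompact.mul_left)
          (fun x ↦ hf₀ (α • (x - a))) hweight
    _ = ∫ x in ball 0 1, ‖x‖ ^ α * rescale α a f x ∂μ :=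
        (setIntegral_eq_integral_of_forall_compl_eq_zero fun x hx ↦ by
          rw [image_eq_zero_of_notMem_tsupport fun h ↦ hx (hsupp' h), mul_zero]).symm

end Weight

section ExpRemainder

/-- The exponential minus its Taylor polynomial of degree `m` at `0`. -/
noncomputable def expRemainder (m : ℕ) (s : ℝ) : ℝ :=
  Real.exp s - ∑ k ∈ Finset.range (m + 1), s ^ k / k.factorial

lemma continuous_expRemainder (m : ℕ) : Continuous (expRemainder m) := by
  unfold expRemainder
  fun_prop

lemma expRemainder_zero (m : ℕ) : expRemainder m 0 = 0 := by
  simp [expRemainder, Finset.sum_range_succ']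

lemma expRemainder_pos (m : ℕ) {s : ℝ} (hs : 0 < s) : 0 < expRemainder m s := by
  have hsum := Real.sum_le_exp_of_nonneg hs.le (m + 2)
  rw [Finset.sum_range_succ] at hsum
  have hterm : 0 < s ^ (m + 1) / (m + 1).factorial := by positivity
  rw [expRemainder, sub_pos]
  linarith

lemma Fm_eq_setIntegral_expRemainder (α σ : ℝ) (m : ℕ) (u : E4 → ℝ) :
    Fm α σ m u = ∫ x in ball 0 1, ‖x‖ ^ α * expRemainder m (σ * u x ^ 2) := by
  simp only [Fm, expRemainder, mul_pow, pow_mul]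

end ExpRemainder

theorem full_space_lower_bound_general {E : Type*} [NormedAddCommGroup E] [InnerProductSpace ℝ E]
    [FiniteDimensional ℝ E] [Nontrivial E] [MeasurableSpace E] [BorelSpace E]
    (μ : Measure E) [μ.IsAddHaarMeasure] {G : ℝ → ℝ} (hG : Continuous G) (hG_zero : G 0 = 0)
    (hG_pos : ∀ t ≠ 0, 0 < G t) :
    ∃ C > (0 : ℝ), ∀ᶠ α : ℝ in atTop, ∃ u : E → ℝ, ContDiff ℝ ∞ u ∧ tsupport u ⊆ ball 0 1 ∧
      ∫ x in ball 0 1, |Δ u x| ^ (finrank ℝ E / 2 : ℝ) ∂μ = 1 ∧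
      C / α ^ finrank ℝ E ≤ ∫ x in ball 0 1, ‖x‖ ^ α * G (u x) ∂μ := by
  have hp : (0 : ℝ) < finrank ℝ E / 2 := div_pos (Nat.cast_pos.2 finrank_pos) two_pos
  have hG_nonneg (t : ℝ) : 0 ≤ G t := by
    rcases eq_or_ne t 0 with rfl | ht
    exacts [hG_zero.ge, (hG_pos t ht).le]
  obtain ⟨u, hu, hsupp, hΔu⟩ :=
    exists_contDiff_integral_abs_laplacian_rpow_eq_one (E := E) μ one_pos hp
  have hGu_supp : tsupport (G ∘ u) ⊆ ball 0 1 := (tsupport_comp_subset hG_zero u).trans hsupp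
  have hGu : 0 < ∫ x, (G ∘ u) x ∂μ := by
    obtain ⟨x, hx⟩ : ∃ x, u x ≠ 0 := by
      refine ne_iff.1 (?_ : u ≠ 0)
      rintro rfl
      simp [hp.ne', Pi.zero_def] at hΔu
    exact (hG.comp hu.continuous).integral_pos_of_hasCompactSupport_nonneg_nonzero
      (hasCompactSupport_of_tsupport_subset_ball hGu_supp) (fun _ ↦ hG_nonneg _) (hG_pos _ hx).ne'
  refine ⟨Real.exp (-3) * ∫ x, (G ∘ u) x ∂μ, by positivity, ?_⟩
  filter_upwards [eventually_ge_atTop 2, eventually_exp_neg_three_le_one_sub_two_div_rpow]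
    with α hα hweight
  have hα₀ : 0 < α := by linarith
  obtain ⟨a, ha⟩ : ∃ a : E, ‖a‖ = 1 - 1 / α :=
    exists_norm_eq E (sub_nonneg.2 ((div_le_one hα₀).2 (by linarith)))
  have hsupp' := tsupport_rescale_subset_unitBall hsupp hα₀ ha
  refine ⟨rescale α a u, contDiff_rescale hu α a, hsupp', ?_, ?_⟩
  · rw [setIntegral_abs_laplacian_rpow_eq_integral μ hsupp' hp.ne',
      integral_abs_laplacian_rescale_rpow μ (hu.of_le (WithTop.coe_le_coe.2 le_top)) hα₀, hΔu]
  · calc Real.exp (-3) * (∫ x, (G ∘ u) x ∂μ) / α ^ finrank ℝ E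
        ≤ (1 - 2 / α) ^ α * ((∫ x, (G ∘ u) x ∂μ) / α ^ finrank ℝ E) := by
          rw [mul_div_assoc]; gcongr
      _ ≤ ∫ x in ball 0 1, ‖x‖ ^ α * G (rescale α a u x) ∂μ :=
          mul_integral_le_setIntegral_norm_rpow_mul_rescale μ (hG.comp hu.continuous)
            (fun _ ↦ hG_nonneg _) hGu_supp hα ha

/-- Lower bound for `T_{α,m}`: there are `C > 0` and `A` such that for all `α ≥ A`,
the supremum of `F_m` over `{u ∈ H²_N(B) : ‖Δu‖₂ = 1}` is at least `C/α⁴`; this is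
witnessed by a smooth function compactly supported in `B` with `‖Δu‖₂ = 1`. -/
theorem full_space_lower_bound (σ : ℝ) (hσ : σ ≤ 32 * Real.pi ^ 2) (hσ0 : 0 < σ)
    (m : ℕ) :
    ∃ C > (0:ℝ), ∃ A : ℝ, ∀ α ≥ A,
      ∃ u : E4 → ℝ, ContDiff ℝ (⊤ : ℕ∞) u ∧ tsupport u ⊆ Metric.ball (0:E4) 1 ∧
        (∫ x in Metric.ball (0:E4) 1, (lap4 u x) ^ 2) = 1 ∧
        C / α ^ 4 ≤ Fm α σ m u := by
  obtain ⟨C, hC, h⟩ := full_space_lower_bound_general (E := E4) volume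
    (G := fun t ↦ expRemainder m (σ * t ^ 2)) ((continuous_expRemainder m).comp (by fun_prop))
    (by simp [expRemainder_zero]) fun t ht ↦ expRemainder_pos m (by positivity)
  have hexp : (4 / 2 : ℝ) = 2 := by norm_num
  exact ⟨C, hC, by simpa [lap4_eq_laplacian, Fm_eq_setIntegral_expRemainder, hexp] using h⟩
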